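/- For K ≥ 2 and 0 < b < a < 1, if a - b² < (4/3)·ab, then ψ_{a,b,K} := 3a(a-1) + 3b(b-1)(K-1) + 4abK > 0; i.e., the condition (a - b²)/(ab) < 4/3 implies ASE > LSE uniformly in K for the K-block homogeneous balanced affinity SBM. -/

import Mathlib

theorem stmt_8 (K : ℕ) (hK : 2 ≤ K) (a b : ℝ) (hb : 0 < b) (hba : b < a) (ha : a < 1)
    (h : a - b ^ 2 < 4 / 3 * (a * b)) :
    3 * a * (a - 1) + 3 * b * (b - 1) * (K - 1) + 4 * a * b * K > 0 := by
  have hK' : (2 : ℝ) ≤ K := by exact_mod_cast hK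
  have h1 : 0 < 3 * a ^ 2 - 3 * a + 4 * a * b := by nlinarith
  have h2 : 0 < 3 * b ^ 2 - 3 * b + 4 * a * b := by nlinarith
  have h3 : 0 < ((K : ℝ) - 1) * (3 * b ^ 2 - 3 * b + 4 * a * b) :=
    mul_pos (by linarith) h2
  linarith
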